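/- arXiv:1910.11392 — 3 statements merged into one kernel-verified Lean document; each statement's English description precedes it below -/
import Mathlib

section
/- Two-dimensional moment persuasion, sufficiency: let a > 0 and let G be the distribution of posterior means induced by revealing ω₂ + aω₁, i.e. the law of x(θ) = E_{F₀}[ω | ω₂ + aω₁ = θ]. If the support of G is contained in a line {(x₁, x₂) : x₂ = a x₁ + b} for some b ∈ ℝ, then G is an optimal solution to (P_m): ∫_X x₁x₂ dG(x) ≥ ∫_X x₁x₂ dG′(x) for every G′ ∈ Δ(X) with G′ ≤_cx F₀. -/
open MeasureTheory

/-- The (topological) support of a measure: points all of whose open neighborhoods have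
positive measure. -/
def msupport {α : Type*} [TopologicalSpace α] [MeasurableSpace α] (τ : Measure α) : Set α :=
  {x | ∀ U : Set α, IsOpen U → x ∈ U → τ U ≠ 0}

/-!
The objective `4a x₁x₂ = T² - L²`, with `T = x₂ + a x₁` and `L = x₂ - a x₁`, is convex in the
revealed direction `T` and concave in `L`. Linearizing `-L²` at the value `b` that `L` takes on
posterior means gives the convex price `T² - 2bL + b²`, which exceeds the objective by `(L - b)²`.
It agrees with the objective on the support of `G`, and `G` and `F₀` give it the same integral,
because `T` is revealed and the remaining terms are affine. So the price certifies, as a dual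
solution, that no `G' ≤_cx F₀` does better than `G`.
-/

open Filter Set Bornology
open scoped RealInnerProductSpace

theorem msupport_eq_support {α : Type*} [TopologicalSpace α] [MeasurableSpace α]
    (τ : Measure α) : msupport τ = τ.support := by
  ext z
  rw [(nhds_basis_opens z).mem_measureSupport]
  simp only [msupport, mem_ofPred_eq, pos_iff_ne_zero, and_imp]
  exact forall_congr' fun U => forall_comm

theorem ae_mem_of_msupport_subset {α : Type*} [TopologicalSpace α] [HereditarilyLindelofSpace α]
    [MeasurableSpace α] {τ : Measure α} {A : Set α} (h : msupport τ ⊆ A) : ∀ᵐ z ∂τ, z ∈ A :=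
  mem_of_superset Measure.support_mem_ae (msupport_eq_support τ ▸ h)

theorem ae_mem_closure_of_measure_eq_one {α : Type*} [TopologicalSpace α] [MeasurableSpace α]
    [OpensMeasurableSpace α] {μ : Measure α} [IsProbabilityMeasure μ] {A : Set α}
    (h : μ A = 1) : ∀ᵐ z ∂μ, z ∈ closure A :=
  (mem_ae_iff_prob_eq_one isClosed_closure.measurableSet).2
    (le_antisymm prob_le_one (h ▸ measure_mono subset_closure))

theorem memLp_id_of_ae_mem_of_isBounded {E : Type*} [NormedAddCommGroup E]
    [SecondCountableTopology E] [MeasurableSpace E] [OpensMeasurableSpace E]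
    {μ : Measure E} [IsFiniteMeasure μ] {A : Set E} (hA : IsBounded A)
    (h : ∀ᵐ z ∂μ, z ∈ A) (p : ENNReal) : MemLp id p μ := by
  obtain ⟨C, hC⟩ := hA.exists_norm_le
  exact .of_bound continuous_id.aestronglyMeasurable C (h.mono hC)

section CondExp

variable {Ω E F : Type*} {m m₀ : MeasurableSpace Ω} {μ : Measure Ω}
  [NormedAddCommGroup E] [NormedSpace ℝ E] [CompleteSpace E]
  [NormedAddCommGroup F] [NormedSpace ℝ F] [CompleteSpace F] {f : Ω → E}

theorem clm_comp_condExp_ae_eq (hm : m ≤ m₀) [SigmaFinite (μ.trim hm)] (hf : Integrable f μ)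
    (T : E →L[ℝ] F) (hT : StronglyMeasurable[m] (T ∘ f)) : T ∘ μ[f | m] =ᵐ[μ] T ∘ f :=
  (T.comp_condExp_comm hf).trans
    (condExp_of_stronglyMeasurable hm hT (T.integrable_comp hf)).eventuallyEq

theorem integral_clm_condExp (hm : m ≤ m₀) [SigmaFinite (μ.trim hm)] (hf : Integrable f μ)
    (T : E →L[ℝ] F) : ∫ ω, T (μ[f | m] ω) ∂μ = ∫ ω, T (f ω) ∂μ := by
  rw [T.integral_comp_comm integrable_condExp, T.integral_comp_comm hf, integral_condExp hm]

end CondExp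

/-- The convex order `G ≤_cx F` on measures on a real topological vector space. Only convex
functions that both measures integrate are tested, so that no Bochner integral takes its junk
value `0`. -/
def ConvexOrderLE {E : Type*} [AddCommGroup E] [Module ℝ E] [TopologicalSpace E]
    [MeasurableSpace E] (G F : Measure E) : Prop :=
  ∀ φ : E → ℝ, Continuous φ → ConvexOn ℝ univ φ → Integrable φ G → Integrable φ F →
    ∫ z, φ z ∂G ≤ ∫ z, φ z ∂F

theorem convexOrderLE_of_convex {E : Type*} [AddCommGroup E] [Module ℝ E] [TopologicalSpace E]
    [MeasurableSpace E] {G F : Measure E} {X : Set E} (hX : Convex ℝ X)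
    (h : ∀ φ : E → ℝ, ContinuousOn φ X → ConvexOn ℝ X φ → ∫ z, φ z ∂G ≤ ∫ z, φ z ∂F) :
    ConvexOrderLE G F :=
  fun φ hφ hφconv _ _ => h φ hφ.continuousOn (hφconv.subset (subset_univ X) hX)

/-- The distribution of posterior means of a state `ω ∼ F` when the information contained in the
σ-algebra `m` is revealed: the law of `E_F[ω | m]`. -/
noncomputable def posteriorMeanLaw {E : Type*} [NormedAddCommGroup E] [NormedSpace ℝ E]
    [CompleteSpace E] (m : MeasurableSpace E) [MeasurableSpace E] (F : Measure E) : Measure E :=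
  F.map (F[fun ω => ω | m])

section Revelation

variable {E H K : Type*} [NormedAddCommGroup E] [NormedSpace ℝ E]
  [NormedAddCommGroup H] [InnerProductSpace ℝ H] [NormedAddCommGroup K] [InnerProductSpace ℝ K]
  (T : E →L[ℝ] H) (L : E →L[ℝ] K) (c : K)

/-- The dual price supporting the objective `‖T z‖² - ‖L z‖²` on the affine subspace `L z = c`:
the concave part `-‖L z‖²` is replaced by its linearization at `c`. -/
def supportingPrice (z : E) : ℝ := ‖T z‖ ^ 2 - 2 * ⟪c, L z⟫ + ‖c‖ ^ 2

theorem supportingPrice_eq_add_sq (z : E) :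
    supportingPrice T L c z = ‖T z‖ ^ 2 - ‖L z‖ ^ 2 + ‖c - L z‖ ^ 2 := by
  rw [supportingPrice, norm_sub_sq_real]
  ring

theorem continuous_supportingPrice : Continuous (supportingPrice T L c) := by
  unfold supportingPrice
  fun_prop

theorem convexOn_supportingPrice : ConvexOn ℝ univ (supportingPrice T L c) := by
  have hsq : ConvexOn ℝ univ fun z => ‖T z‖ ^ 2 :=
    ((convexOn_univ_norm (E := H)).comp_linearMap T.toLinearMap).pow
      (fun _ _ => norm_nonneg _) 2
  have hlin : ConcaveOn ℝ univ fun z => 2 * ⟪c, L z⟫ :=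
    ((2 : ℝ) • (innerSL ℝ c ∘L L)).toLinearMap.concaveOn convex_univ
  exact (hsq.sub hlin).add_const _

variable {m : MeasurableSpace E} [mE : MeasurableSpace E]

theorem integrable_sq_norm_clm {μ : Measure E} (hμ : MemLp id 2 μ) :
    Integrable (fun z => ‖T z‖ ^ 2) μ :=
  (T.comp_memLp' hμ).integrable_norm_pow two_ne_zero

theorem integrable_supportingPrice {μ : Measure E} [IsFiniteMeasure μ] (hμ : MemLp id 2 μ) :
    Integrable (supportingPrice T L c) μ :=
  ((integrable_sq_norm_clm T hμ).sub
    (((innerSL ℝ c ∘L L).integrable_comp (hμ.integrable one_le_two)).const_mul 2)).add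
      (integrable_const _)

variable [CompleteSpace E] [CompleteSpace H] [BorelSpace E] {F : Measure E}

theorem integral_posteriorMeanLaw (hm : m ≤ mE) {φ : E → ℝ} (hφ : Continuous φ) :
    ∫ z, φ z ∂posteriorMeanLaw m F = ∫ ω, φ (F[fun ω => ω | m] ω) ∂F :=
  integral_map (stronglyMeasurable_condExp.mono hm).measurable.aemeasurable hφ.aestronglyMeasurable

theorem integral_supportingPrice_posteriorMeanLaw [IsFiniteMeasure F]
    (hm : m ≤ mE) (hF : MemLp id 2 F) (hT : StronglyMeasurable[m] T) :
    ∫ z, supportingPrice T L c z ∂posteriorMeanLaw m F = ∫ z, supportingPrice T L c z ∂F := by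
  let ℓ : E →L[ℝ] ℝ := (2 : ℝ) • (innerSL ℝ c ∘L L)
  let x : E → E := F[fun ω => ω | m]
  have hid : Integrable (fun ω : E => ω) F := hF.integrable one_le_two
  have hℓid : Integrable (fun ω => ℓ ω) F := ℓ.integrable_comp hid
  have hℓx : Integrable (fun ω => ℓ (x ω)) F := ℓ.integrable_comp integrable_condExp
  have hdiff : Integrable (fun ω => ℓ (x ω) - ℓ ω) F := hℓx.sub hℓid
  have hprice : ∀ᵐ ω ∂F,
      supportingPrice T L c (x ω) = supportingPrice T L c ω - (ℓ (x ω) - ℓ ω) := by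
    filter_upwards [clm_comp_condExp_ae_eq hm hid T hT] with ω (hω : T (x ω) = T ω)
    have hℓ (z : E) : supportingPrice T L c z = ‖T z‖ ^ 2 - ℓ z + ‖c‖ ^ 2 := rfl
    rw [hℓ, hℓ, hω]
    ring
  calc ∫ z, supportingPrice T L c z ∂posteriorMeanLaw m F
      = ∫ ω, supportingPrice T L c (x ω) ∂F :=
        integral_posteriorMeanLaw hm (continuous_supportingPrice T L c)
    _ = ∫ ω, (supportingPrice T L c ω - (ℓ (x ω) - ℓ ω)) ∂F := integral_congr_ae hprice
    _ = ∫ ω, supportingPrice T L c ω ∂F - (∫ ω, ℓ (x ω) ∂F - ∫ ω, ℓ ω ∂F) := by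
        rw [integral_sub (integrable_supportingPrice T L c hF) hdiff, integral_sub hℓx hℓid]
    _ = ∫ ω, supportingPrice T L c ω ∂F := by
        rw [integral_clm_condExp hm hid ℓ, sub_self, sub_zero]

theorem integral_sq_sub_sq_le_posteriorMeanLaw [IsFiniteMeasure F]
    (hm : m ≤ mE) (hF : MemLp id 2 F) (hT : StronglyMeasurable[m] T)
    (hL : ∀ᵐ z ∂posteriorMeanLaw m F, L z = c)
    {G' : Measure E} [IsFiniteMeasure G'] (hG' : MemLp id 2 G') (hcx : ConvexOrderLE G' F) :
    ∫ z, (‖T z‖ ^ 2 - ‖L z‖ ^ 2) ∂G' ≤ ∫ z, (‖T z‖ ^ 2 - ‖L z‖ ^ 2) ∂posteriorMeanLaw m F :=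
  calc ∫ z, (‖T z‖ ^ 2 - ‖L z‖ ^ 2) ∂G'
      ≤ ∫ z, supportingPrice T L c z ∂G' := by
        refine integral_mono ((integrable_sq_norm_clm T hG').sub (integrable_sq_norm_clm L hG'))
          (integrable_supportingPrice T L c hG') fun z => ?_
        rw [supportingPrice_eq_add_sq]
        exact le_add_of_nonneg_right (sq_nonneg _)
    _ ≤ ∫ z, supportingPrice T L c z ∂F :=
        hcx _ (continuous_supportingPrice T L c) (convexOn_supportingPrice T L c)
          (integrable_supportingPrice T L c hG') (integrable_supportingPrice T L c hF)
    _ = ∫ z, supportingPrice T L c z ∂posteriorMeanLaw m F :=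
        (integral_supportingPrice_posteriorMeanLaw T L c hm hF hT).symm
    _ = ∫ z, (‖T z‖ ^ 2 - ‖L z‖ ^ 2) ∂posteriorMeanLaw m F := by
        refine integral_congr_ae (hL.mono fun z hz => ?_)
        simp only [supportingPrice_eq_add_sq, hz, sub_self, norm_zero, ne_eq, two_ne_zero,
          not_false_eq_true, zero_pow, add_zero]

end Revelation

theorem two_dim_revelation_optimal_general {F₀ : Measure (ℝ × ℝ)} [IsFiniteMeasure F₀]
    (hF₀ : MemLp id 2 F₀) {a b : ℝ} (ha : 0 < a) {G : Measure (ℝ × ℝ)}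
    (hG : G = posteriorMeanLaw
      (MeasurableSpace.comap (fun ω : ℝ × ℝ => ω.2 + a * ω.1) inferInstance) F₀)
    (hline : ∀ᵐ z ∂G, z.2 = a * z.1 + b)
    {G' : Measure (ℝ × ℝ)} [IsFiniteMeasure G'] (hG' : MemLp id 2 G')
    (hcx : ConvexOrderLE G' F₀) :
    ∫ z, z.1 * z.2 ∂G' ≤ ∫ z, z.1 * z.2 ∂G := by
  let T : ℝ × ℝ →L[ℝ] ℝ := .snd ℝ ℝ ℝ + a • .fst ℝ ℝ ℝ
  let L : ℝ × ℝ →L[ℝ] ℝ := .snd ℝ ℝ ℝ - a • .fst ℝ ℝ ℝ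
  have hpolar (z : ℝ × ℝ) : ‖T z‖ ^ 2 - ‖L z‖ ^ 2 = 4 * a * (z.1 * z.2) := by
    simp only [Real.norm_eq_abs, sq_abs]
    change (z.2 + a * z.1) ^ 2 - (z.2 - a * z.1) ^ 2 = _
    ring
  have hL : ∀ᵐ z ∂G, L z = b := hline.mono fun z hz => sub_eq_iff_eq_add'.2 hz
  subst hG
  have hopt := integral_sq_sub_sq_le_posteriorMeanLaw T L b T.continuous.measurable.comap_le hF₀
    (comap_measurable T).stronglyMeasurable hL hG' hcx
  simp only [hpolar, integral_const_mul] at hopt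
  exact le_of_mul_le_mul_left hopt (by positivity)

/-- **Two-dimensional moment persuasion, sufficiency** (Proposition 2, "if" direction):
let `a > 0` and let `G` be the law of the posterior mean `x = E[ω | ω₂ + aω₁]` induced by
revealing `ω₂ + aω₁`.  If the support of `G` lies in the line `{x₂ = a x₁ + b}` for some `b`,
then `G` is optimal for (P_m): it maximizes `∫ x₁ x₂ dG'` over all `G' ∈ Δ(X)` with
`G' ≤_cx F₀`. -/
theorem two_dim_revelation_optimal
    (S : Set (ℝ × ℝ)) (hScomp : IsCompact S)
    (hSpos : ∀ ω ∈ S, 0 ≤ ω.1 ∧ 0 ≤ ω.2)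
    (F₀ : Measure (ℝ × ℝ)) [IsProbabilityMeasure F₀]
    (hF₀supp : msupport F₀ = S)
    (X : Set (ℝ × ℝ)) (hX : X = convexHull ℝ S)
    (a : ℝ) (ha : 0 < a)
    (x : ℝ × ℝ → ℝ × ℝ)
    (hx : x = F₀[(fun ω : ℝ × ℝ => ω) |
      MeasurableSpace.comap (fun ω : ℝ × ℝ => ω.2 + a * ω.1) inferInstance])
    (G : Measure (ℝ × ℝ)) (hG : G = Measure.map x F₀)
    (b : ℝ) (hline : msupport G ⊆ {z : ℝ × ℝ | z.2 = a * z.1 + b}) :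
    ∀ G' : Measure (ℝ × ℝ), IsProbabilityMeasure G' → G' X = 1 →
      (∀ φ : ℝ × ℝ → ℝ, ContinuousOn φ X → ConvexOn ℝ X φ →
        ∫ z, φ z ∂G' ≤ ∫ z, φ z ∂F₀) →
      ∫ z, z.1 * z.2 ∂G' ≤ ∫ z, z.1 * z.2 ∂G := by
  intro G' _ hG'X hcx
  subst hx hX
  have hF₀ : MemLp id 2 F₀ :=
    memLp_id_of_ae_mem_of_isBounded hScomp.isBounded (ae_mem_of_msupport_subset hF₀supp.subset) 2
  have hG' : MemLp id 2 G' :=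
    memLp_id_of_ae_mem_of_isBounded (isBounded_convexHull.2 hScomp.isBounded).closure
      (ae_mem_closure_of_measure_eq_one hG'X) 2
  exact two_dim_revelation_optimal_general hF₀ ha hG (ae_mem_of_msupport_subset hline) hG'
    (convexOrderLE_of_convex (convex_convexHull ℝ S) hcx)
end

section
/- If the concave closure V̂ has bounded steepness at μ₀ with respect to the Kantorovich–Rubinstein distance d, then the persuasion problem is regular, i.e. V̂ is superdifferentiable at μ₀. -/
open MeasureTheory

/-- Convex combination `t μ + (1 - t) η` of two probability measures. -/
noncomputable def mix {Ω : Type*} [MeasurableSpace Ω] (t : NNReal) (ht : t ≤ 1)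
    (μ η : ProbabilityMeasure Ω) : ProbabilityMeasure Ω :=
  ⟨t • (μ : Measure Ω) + (1 - t) • (η : Measure Ω), by
    constructor
    simp only [Measure.coe_add, Pi.add_apply, Measure.smul_apply, smul_eq_mul,
      measure_univ, mul_one, ENNReal.smul_def]
    rw [← ENNReal.coe_add, add_tsub_cancel_of_le ht, ENNReal.coe_one]⟩

/-- A function `H : Δ(Ω) → ℝ` is affine if it respects convex combinations. -/
def IsAffine {Ω : Type*} [MeasurableSpace Ω] (H : ProbabilityMeasure Ω → ℝ) : Prop :=
  ∀ (μ η : ProbabilityMeasure Ω) (t : NNReal) (ht : t ≤ 1),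
    H (mix t ht μ η) = (t : ℝ) * H μ + (1 - (t : ℝ)) * H η

/-- The concave closure `V̂(μ) = inf {H(μ) : H affine continuous, H ≥ V}`. -/
noncomputable def concaveClosure {Ω : Type*} [MeasurableSpace Ω] [TopologicalSpace Ω]
    [OpensMeasurableSpace Ω] (V : ProbabilityMeasure Ω → ℝ) (μ : ProbabilityMeasure Ω) : ℝ :=
  sInf {r : ℝ | ∃ H : ProbabilityMeasure Ω → ℝ,
    Continuous H ∧ IsAffine H ∧ (∀ μ', V μ' ≤ H μ') ∧ r = H μ}

/-- The persuasion problem is regular if the concave closure `V̂` is superdifferentiable at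
`μ₀`. -/
def RegularPersuasion {Ω : Type*} [MeasurableSpace Ω] [TopologicalSpace Ω]
    [OpensMeasurableSpace Ω] (V : ProbabilityMeasure Ω → ℝ) (μ₀ : ProbabilityMeasure Ω) : Prop :=
  ∃ Vbar : ProbabilityMeasure Ω → ℝ, Continuous Vbar ∧ IsAffine Vbar ∧
    Vbar μ₀ = concaveClosure V μ₀ ∧ ∀ μ, concaveClosure V μ ≤ Vbar μ

/-- The Kantorovich–Rubinstein distance between two (finite) measures:
`d(μ, η) = sup {∫ f dμ − ∫ f dη : f 1-Lipschitz, sup |f| ≤ 1}`. -/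
noncomputable def krDist {Ω : Type*} [MeasurableSpace Ω] [PseudoMetricSpace Ω]
    (μ η : Measure Ω) : ℝ :=
  sSup {r : ℝ | ∃ f : Ω → ℝ, LipschitzWith 1 f ∧ (∀ ω, |f ω| ≤ 1) ∧
    r = ∫ ω, f ω ∂μ - ∫ ω, f ω ∂η}

/-!
Bounded steepness gives, for every `μ`, a function `f` in the `L`-fold multiple `L • B` of the unit
ball `B` of bounded Lipschitz functions such that `V̂ μ - V̂ μ₀ ≤ ∫ f dμ - ∫ f dμ₀`; regularity asks
for one `f` that serves all `μ`. The pairs `(μ, r)` with `r ≤ V̂ μ` form a convex set, because `V̂`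
is concave, and `B` is convex and, by Arzelà–Ascoli, compact, so Sion's minimax theorem applied to
`(r - V̂ μ₀) - (∫ f dμ - ∫ f dμ₀)` exchanges the quantifiers.
-/

open Set
open scoped BoundedContinuousFunction Pointwise

section Minimax

theorem exists_forall_le_of_forall_exists_le {E F β : Type*} [LinearOrder β] [DenselyOrdered β]
    [TopologicalSpace E] [AddCommGroup E] [Module ℝ E] [IsTopologicalAddGroup E]
    [ContinuousSMul ℝ E]
    [TopologicalSpace F] [AddCommGroup F] [Module ℝ F] [IsTopologicalAddGroup F]
    [ContinuousSMul ℝ F]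
    {X : Set E} {Y : Set F} {f : E → F → β} (hX : X.Nonempty) (hXconv : Convex ℝ X)
    (hXcomp : IsCompact X) (hYconv : Convex ℝ Y)
    (hlsc : ∀ y ∈ Y, LowerSemicontinuousOn (fun x => f x y) X)
    (hconv : ∀ y ∈ Y, QuasiconvexOn ℝ X fun x => f x y)
    (husc : ∀ x ∈ X, UpperSemicontinuousOn (fun y => f x y) Y)
    (hconc : ∀ x ∈ X, QuasiconcaveOn ℝ Y fun y => f x y)
    {t : β} (h : ∀ y ∈ Y, ∃ x ∈ X, f x y ≤ t) : ∃ x ∈ X, ∀ y ∈ Y, f x y ≤ t := by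
  by_contra! hcon
  -- Compactness of `X` leaves finitely many `y` to consider, for which Sion's theorem is available.
  obtain ⟨s, hs⟩ : ∃ s : Finset Y, ∀ x ∈ X, ∃ y ∈ s, t < f x y := by
    rw [← LowerSemicontinuousOn.inter_biInter_preimage_Iic_eq_empty_iff_exists_finset hXcomp hlsc]
    refine eq_empty_of_forall_notMem fun x ⟨hx, hxY⟩ => ?_
    obtain ⟨y, hy, hlt⟩ := hcon x hx
    exact hlt.not_ge (mem_iInter₂.1 hxY y hy)
  obtain ⟨y, hy, hlt⟩ := Sion.exists_lt_iInf_of_lt_iInf_of_finite hX hXcomp hlsc hconv hYconv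
    husc hconc hXconv (s := Subtype.val '' (s : Set Y)) (toFinite _)
    (Subtype.coe_image_subset Y _) fun x hx =>
      let ⟨y, hys, hy⟩ := hs x hx
      ⟨y, mem_image_of_mem _ hys, hy⟩
  obtain ⟨x, hx, hle⟩ := h y hy
  exact (hlt x hx).not_ge hle

theorem exists_forall_snd_sub_le_fst_apply_sub {E : Type*} [AddCommGroup E] [Module ℝ E]
    [TopologicalSpace E] [IsTopologicalAddGroup E] [ContinuousSMul ℝ E]
    {B : Set E} (hB : B.Nonempty) (hBconv : Convex ℝ B) (hBcomp : IsCompact B)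
    {C : Set (StrongDual ℝ E × ℝ)} (hC : Convex ℝ C) (p₀ : StrongDual ℝ E × ℝ)
    (h : ∀ p ∈ C, ∃ f ∈ B, p.2 - p₀.2 ≤ p.1 f - p₀.1 f) :
    ∃ f ∈ B, ∀ p ∈ C, p.2 - p₀.2 ≤ p.1 f - p₀.1 f := by
  let gap (f : E) (p : StrongDual ℝ E × ℝ) : ℝ := (p.2 - p₀.2) - (p.1 f - p₀.1 f)
  have hconv (p : StrongDual ℝ E × ℝ) : ConvexOn ℝ B fun f => gap f p :=
    (convexOn_const (p.2 - p₀.2) hBconv).sub ((p.1 - p₀.1).toLinearMap.concaveOn hBconv)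
  have hconc (f : E) : ConcaveOn ℝ C (gap f) := by
    refine ⟨hC, fun p _ q _ a b _ _ hab => le_of_eq ?_⟩
    obtain rfl : b = 1 - a := by linarith
    simp only [gap, smul_eq_mul, Prod.snd_add, Prod.fst_add, Prod.smul_fst, Prod.smul_snd,
      add_apply, smul_apply]
    ring
  have hcont (p : StrongDual ℝ E × ℝ) : Continuous fun f => gap f p := by fun_prop
  have hcont' (f : E) : Continuous (gap f) := by fun_prop
  simpa only [gap, sub_nonpos] using exists_forall_le_of_forall_exists_le
    (f := gap) (t := 0) hB hBconv hBcomp hC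
    (fun p _ => (hcont p).lowerSemicontinuous.lowerSemicontinuousOn _)
    (fun p _ => (hconv p).quasiconvexOn)
    (fun f _ => (hcont' f).upperSemicontinuous.upperSemicontinuousOn _)
    (fun f _ => (hconc f).quasiconcaveOn)
    (by simpa only [gap, sub_nonpos] using h)

end Minimax

section Integration

variable {Ω : Type*} [MeasurableSpace Ω] [TopologicalSpace Ω] [OpensMeasurableSpace Ω]

/-- A finite measure as a continuous linear functional on the bounded continuous functions,
`f ↦ ∫ f dμ`. It carries the convex structure of `Δ(Ω)` over to a vector space. -/
noncomputable def integralDual (μ : Measure Ω) [IsFiniteMeasure μ] : StrongDual ℝ (Ω →ᵇ ℝ) :=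
  LinearMap.mkContinuous
    { toFun := fun f => ∫ ω, f ω ∂μ
      map_add' := fun f g => integral_add (f.integrable μ) (g.integrable μ)
      map_smul' := fun c f => integral_const_mul c f }
    (μ.real univ) fun f => f.norm_integral_le_mul_norm μ

@[simp]
theorem integralDual_apply (μ : Measure Ω) [IsFiniteMeasure μ] (f : Ω →ᵇ ℝ) :
    integralDual μ f = ∫ ω, f ω ∂μ :=
  rfl

theorem integralDual_mix (t : NNReal) (ht : t ≤ 1) (μ η : ProbabilityMeasure Ω) :
    integralDual (mix t ht μ η : Measure Ω) =
      (t : ℝ) • integralDual (μ : Measure Ω) + (1 - (t : ℝ)) • integralDual (η : Measure Ω) := by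
  ext f
  change ∫ ω, f ω ∂(t • (μ : Measure Ω) + (1 - t) • (η : Measure Ω)) = _
  rw [integral_add_measure (f.integrable _) (f.integrable _), integral_smul_nnreal_measure,
    integral_smul_nnreal_measure]
  simp [NNReal.smul_def, NNReal.coe_sub ht]

end Integration

section KantorovichRubinstein

variable {Ω : Type*} [PseudoMetricSpace Ω]

variable (Ω) in
/-- The unit ball of the bounded Lipschitz functions, i.e. the test functions in the definition of
the Kantorovich–Rubinstein distance `krDist`. -/
def krBall : Set (Ω →ᵇ ℝ) :=
  {f | LipschitzWith 1 f ∧ ∀ ω, |f ω| ≤ 1}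

theorem zero_mem_krBall : (0 : Ω →ᵇ ℝ) ∈ krBall Ω :=
  ⟨LipschitzWith.const' 0, by simp⟩

theorem krBall_eq_iInter_preimage_closedBall :
    krBall Ω =
      (⋂ x, ⋂ y, (BoundedContinuousFunction.evalCLM ℝ x - BoundedContinuousFunction.evalCLM ℝ y :
        StrongDual ℝ (Ω →ᵇ ℝ)) ⁻¹' Metric.closedBall 0 (dist x y)) ∩
      ⋂ x, (BoundedContinuousFunction.evalCLM ℝ x : StrongDual ℝ (Ω →ᵇ ℝ)) ⁻¹'
        Metric.closedBall 0 1 := by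
  ext f
  simp [krBall, lipschitzWith_iff_dist_le_mul, Real.dist_eq]

theorem convex_krBall : Convex ℝ (krBall Ω) := by
  have hpre (φ : StrongDual ℝ (Ω →ᵇ ℝ)) (r : ℝ) : Convex ℝ (φ ⁻¹' Metric.closedBall 0 r) :=
    (convex_closedBall 0 r).linear_preimage φ.toLinearMap
  rw [krBall_eq_iInter_preimage_closedBall]
  exact (convex_iInter₂ fun x y => hpre _ _).inter (convex_iInter fun x => hpre _ _)

theorem isClosed_krBall : IsClosed (krBall Ω) := by
  have hpre (φ : StrongDual ℝ (Ω →ᵇ ℝ)) (r : ℝ) : IsClosed (φ ⁻¹' Metric.closedBall 0 r) :=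
    Metric.isClosed_closedBall.preimage φ.continuous
  rw [krBall_eq_iInter_preimage_closedBall]
  exact (isClosed_iInter fun x => isClosed_iInter fun y => hpre _ _).inter
    (isClosed_iInter fun x => hpre _ _)

theorem isCompact_krBall [CompactSpace Ω] : IsCompact (krBall Ω) :=
  BoundedContinuousFunction.arzela_ascoli₂ (Metric.closedBall 0 1) (isCompact_closedBall 0 1) _
    isClosed_krBall (fun f ω hf => by simpa using hf.2 ω)
    (LipschitzWith.uniformEquicontinuous _ 1 fun f : krBall Ω => f.2.1).equicontinuous

variable [MeasurableSpace Ω]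

theorem krDist_eq_sSup_image (μ η : Measure Ω) :
    krDist μ η = sSup ((fun f : Ω →ᵇ ℝ => ∫ ω, f ω ∂μ - ∫ ω, f ω ∂η) '' krBall Ω) := by
  rw [krDist]
  congr 1
  ext r
  constructor
  · rintro ⟨f, hf, hbound, rfl⟩
    exact ⟨BoundedContinuousFunction.ofNormedAddCommGroup f hf.continuous 1 hbound,
      ⟨hf, hbound⟩, rfl⟩
  · rintro ⟨f, ⟨hf, hbound⟩, rfl⟩
    exact ⟨f, hf, hbound, rfl⟩

theorem exists_mem_krBall_krDist_eq [OpensMeasurableSpace Ω] [CompactSpace Ω] (μ η : Measure Ω)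
    [IsFiniteMeasure μ] [IsFiniteMeasure η] :
    ∃ f ∈ krBall Ω, krDist μ η = ∫ ω, f ω ∂μ - ∫ ω, f ω ∂η := by
  rw [krDist_eq_sSup_image]
  exact isCompact_krBall.exists_sSup_image_eq ⟨0, zero_mem_krBall⟩
    ((integralDual μ).continuous.sub (integralDual η).continuous).continuousOn

end KantorovichRubinstein

section Concave

/-- Concavity of a function on `Δ(Ω)`, the one-sided counterpart of `IsAffine`. Mathlib's
`ConcaveOn` does not apply, since `ProbabilityMeasure Ω` does not lie in a vector space. -/
def IsConcave {Ω : Type*} [MeasurableSpace Ω] (W : ProbabilityMeasure Ω → ℝ) : Prop :=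
  ∀ (μ η : ProbabilityMeasure Ω) (t : NNReal) (ht : t ≤ 1),
    (t : ℝ) * W μ + (1 - (t : ℝ)) * W η ≤ W (mix t ht μ η)

/-- The hypograph of `W : Δ(Ω) → ℝ`, with probability measures regarded as functionals through
`integralDual`. -/
def dualHypograph {Ω : Type*} [MeasurableSpace Ω] [TopologicalSpace Ω] [OpensMeasurableSpace Ω]
    (W : ProbabilityMeasure Ω → ℝ) : Set (StrongDual ℝ (Ω →ᵇ ℝ) × ℝ) :=
  {p | ∃ μ : ProbabilityMeasure Ω, p.1 = integralDual (μ : Measure Ω) ∧ p.2 ≤ W μ}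

theorem IsConcave.convex_dualHypograph {Ω : Type*} [MeasurableSpace Ω] [TopologicalSpace Ω]
    [OpensMeasurableSpace Ω] {W : ProbabilityMeasure Ω → ℝ} (hW : IsConcave W) :
    Convex ℝ (dualHypograph W) := by
  rintro ⟨_, r⟩ ⟨μ, rfl, hr⟩ ⟨_, s⟩ ⟨η, rfl, hs⟩ a b ha hb hab
  obtain rfl : b = 1 - a := by linarith
  lift a to NNReal using ha
  have ha1 : a ≤ 1 := NNReal.coe_le_coe.1 (sub_nonneg.1 hb)
  refine ⟨mix a ha1 μ η, (integralDual_mix a ha1 μ η).symm, ?_⟩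
  calc (a : ℝ) * r + (1 - a) * s ≤ a * W μ + (1 - a) * W η := by gcongr
    _ ≤ W (mix a ha1 μ η) := hW μ η a ha1

theorem IsConcave.exists_supergradient {Ω : Type*} [PseudoMetricSpace Ω] [CompactSpace Ω]
    [MeasurableSpace Ω] [OpensMeasurableSpace Ω] {W : ProbabilityMeasure Ω → ℝ}
    (hW : IsConcave W) {μ₀ : ProbabilityMeasure Ω} {L : ℝ}
    (hsteep : ∀ μ : ProbabilityMeasure Ω,
      W μ - W μ₀ ≤ L * krDist (μ : Measure Ω) (μ₀ : Measure Ω)) :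
    ∃ f : Ω →ᵇ ℝ, ∀ μ : ProbabilityMeasure Ω,
      W μ - W μ₀ ≤ ∫ ω, f ω ∂(μ : Measure Ω) - ∫ ω, f ω ∂(μ₀ : Measure Ω) := by
  have hpointwise : ∀ p ∈ dualHypograph W,
      ∃ f ∈ L • krBall Ω, p.2 - W μ₀ ≤ p.1 f - integralDual (μ₀ : Measure Ω) f := by
    rintro ⟨_, r⟩ ⟨μ, rfl, hr⟩
    obtain ⟨g, hg, hdist⟩ := exists_mem_krBall_krDist_eq (μ : Measure Ω) (μ₀ : Measure Ω)
    refine ⟨L • g, smul_mem_smul_set hg, ?_⟩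
    calc r - W μ₀ ≤ W μ - W μ₀ := sub_le_sub_right hr _
      _ ≤ L * krDist (μ : Measure Ω) (μ₀ : Measure Ω) := hsteep μ
      _ = integralDual (μ : Measure Ω) (L • g) - integralDual (μ₀ : Measure Ω) (L • g) := by
        rw [hdist, map_smul, map_smul, smul_eq_mul, smul_eq_mul, ← mul_sub, integralDual_apply,
          integralDual_apply]
  obtain ⟨f, -, hf⟩ := exists_forall_snd_sub_le_fst_apply_sub
    ⟨_, smul_mem_smul_set zero_mem_krBall⟩ (convex_krBall.smul L) (isCompact_krBall.smul L)
    hW.convex_dualHypograph (integralDual (μ₀ : Measure Ω), W μ₀) hpointwise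
  exact ⟨f, fun μ => hf (integralDual (μ : Measure Ω), W μ) ⟨μ, rfl, le_rfl⟩⟩

end Concave

section ConcaveClosure

theorem isAffine_integral_add_const {Ω : Type*} [MeasurableSpace Ω] [TopologicalSpace Ω]
    [OpensMeasurableSpace Ω] (f : Ω →ᵇ ℝ) (c : ℝ) :
    IsAffine fun μ : ProbabilityMeasure Ω => ∫ ω, f ω ∂(μ : Measure Ω) + c := by
  intro μ η t ht
  have hmix := DFunLike.congr_fun (integralDual_mix t ht μ η) f
  simp only [add_apply, smul_apply, integralDual_apply, smul_eq_mul] at hmix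
  simp only [hmix]
  ring

variable {Ω : Type*} [MeasurableSpace Ω] [TopologicalSpace Ω] [OpensMeasurableSpace Ω]
  {V : ProbabilityMeasure Ω → ℝ}

theorem concaveClosure_le {H : ProbabilityMeasure Ω → ℝ} (hcont : Continuous H)
    (haff : IsAffine H) (hVH : ∀ μ, V μ ≤ H μ) (μ : ProbabilityMeasure Ω) :
    concaveClosure V μ ≤ H μ := by
  refine csInf_le ⟨V μ, ?_⟩ ⟨H, hcont, haff, hVH, rfl⟩
  rintro _ ⟨H', -, -, hVH', rfl⟩
  exact hVH' μ

theorem le_concaveClosure (hV : BddAbove (range V)) {μ : ProbabilityMeasure Ω} {r : ℝ}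
    (h : ∀ H : ProbabilityMeasure Ω → ℝ, Continuous H → IsAffine H → (∀ μ', V μ' ≤ H μ') →
      r ≤ H μ) : r ≤ concaveClosure V μ := by
  obtain ⟨M, hM⟩ := hV
  refine le_csInf ⟨M, fun _ => M, continuous_const, fun _ _ _ _ => by ring,
    fun μ' => hM (mem_range_self μ'), rfl⟩ ?_
  rintro _ ⟨H, hcont, haff, hVH, rfl⟩
  exact h H hcont haff hVH

theorem isConcave_concaveClosure (hV : BddAbove (range V)) : IsConcave (concaveClosure V) := by
  intro μ η t ht
  refine le_concaveClosure hV fun H hcont haff hVH => ?_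
  have ht' : 0 ≤ 1 - (t : ℝ) := sub_nonneg.2 (NNReal.coe_le_coe.2 ht)
  rw [haff]
  gcongr <;> exact concaveClosure_le hcont haff hVH _

end ConcaveClosure

theorem regular_of_boundedSteepness_general {Ω : Type*} [PseudoMetricSpace Ω] [CompactSpace Ω]
    [MeasurableSpace Ω] [OpensMeasurableSpace Ω] (μ₀ : ProbabilityMeasure Ω)
    (V : ProbabilityMeasure Ω → ℝ) (hV : BddAbove (range V)) (L : ℝ)
    (hsteep : ∀ μ : ProbabilityMeasure Ω,
      concaveClosure V μ - concaveClosure V μ₀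
        ≤ L * krDist (μ : Measure Ω) (μ₀ : Measure Ω)) :
    RegularPersuasion V μ₀ := by
  obtain ⟨f, hf⟩ := (isConcave_concaveClosure hV).exists_supergradient hsteep
  refine ⟨fun μ => ∫ ω, f ω ∂(μ : Measure Ω) +
      (concaveClosure V μ₀ - ∫ ω, f ω ∂(μ₀ : Measure Ω)), ?_, isAffine_integral_add_const f _,
    add_sub_cancel _ _, fun μ => by linarith [hf μ]⟩
  exact (ProbabilityMeasure.continuous_integral_boundedContinuousFunction f).add continuous_const

/-- **Theorem 4**: if the concave closure `V̂` has bounded steepness at `μ₀` (with respect to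
the Kantorovich–Rubinstein distance), then the persuasion problem is regular. -/
theorem regular_of_boundedSteepness
    {Ω : Type*} [MetricSpace Ω] [CompactSpace Ω] [MeasurableSpace Ω] [BorelSpace Ω]
    (μ₀ : ProbabilityMeasure Ω)
    (hfull : ∀ U : Set Ω, IsOpen U → U.Nonempty → 0 < (μ₀ : Measure Ω) U)
    (V : ProbabilityMeasure Ω → ℝ) (hV : UpperSemicontinuous V)
    (L : ℝ)
    (hsteep : ∀ μ : ProbabilityMeasure Ω,
      concaveClosure V μ - concaveClosure V μ₀
        ≤ L * krDist (μ : Measure Ω) (μ₀ : Measure Ω)) :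
    RegularPersuasion V μ₀ := by
  have hbdd := (hV.upperSemicontinuousOn univ).bddAbove_of_isCompact isCompact_univ
  exact regular_of_boundedSteepness_general μ₀ V (by rwa [image_univ] at hbdd) L hsteep
end

section
/- If μ and η are Borel probability measures on a compact metric space Ω, then for any real number λ, d(μ, λη) ≥ (1/2) d(μ, η), where d is the Kantorovich–Rubinstein distance extended to signed measures. -/
open MeasureTheory

/-- Integral of `f` against a (finite) signed measure, via the Jordan decomposition. -/
noncomputable def signedIntegral {Ω : Type*} [MeasurableSpace Ω]
    (s : SignedMeasure Ω) (f : Ω → ℝ) : ℝ :=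
  ∫ ω, f ω ∂s.toJordanDecomposition.posPart - ∫ ω, f ω ∂s.toJordanDecomposition.negPart

/-- The Kantorovich–Rubinstein distance between two finite signed measures:
`d(s, t) = sup {∫ f d(s − t) : f 1-Lipschitz, sup |f| ≤ 1}`. -/
noncomputable def krDistSigned {Ω : Type*} [MeasurableSpace Ω] [PseudoMetricSpace Ω]
    (s t : SignedMeasure Ω) : ℝ :=
  sSup {r : ℝ | ∃ f : Ω → ℝ, LipschitzWith 1 f ∧ (∀ ω, |f ω| ≤ 1) ∧
    r = signedIntegral (s - t) f}

/-! Let `s` be a signed measure and `η` a finite measure with `s(Ω) = η(Ω)`. By the triangle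
inequality `d(s, η) ≤ d(s, λη) + d(λη, η)`, and the last term is at most `|λ - 1| η(Ω)`. This is the
difference of total masses `|s(Ω) - λη(Ω)|`, which the constant test functions `±1` show to be at
most `d(s, λη)`. -/

section SignedIntegral

variable {Ω : Type*} [MeasurableSpace Ω]

theorem signedIntegral_eq_integral {s : SignedMeasure Ω} {f : Ω → ℝ} (hf : s.Integrable f) :
    signedIntegral s f = ∫ᵛ ω, f ω ∂<•s := by
  obtain ⟨hpos, hneg⟩ : s.toJordanDecomposition.posPart.toSignedMeasure.Integrable f ∧
      s.toJordanDecomposition.negPart.toSignedMeasure.Integrable f := by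
    rw [VectorMeasure.Integrable, ← s.totalVariation_eq_variation] at hf
    simpa only [VectorMeasure.Integrable, Measure.variation_toSignedMeasure] using
      integrable_add_measure.1 hf
  conv_rhs => rw [← s.toSignedMeasure_toJordanDecomposition, JordanDecomposition.toSignedMeasure]
  rw [VectorMeasure.integral_sub_vectorMeasure hpos hneg, VectorMeasure.integral_toSignedMeasure,
    VectorMeasure.integral_toSignedMeasure, signedIntegral]

theorem signedIntegral_sub_eq_integral_sub_integral {s t : SignedMeasure Ω} {f : Ω → ℝ}
    (hs : s.Integrable f) (ht : t.Integrable f) :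
    signedIntegral (s - t) f = ∫ᵛ ω, f ω ∂<•s - ∫ᵛ ω, f ω ∂<•t := by
  rw [signedIntegral_eq_integral (hs.sub_vectorMeasure ht),
    VectorMeasure.integral_sub_vectorMeasure hs ht]

instance signedMeasure_isFiniteMeasure_variation (s : SignedMeasure Ω) :
    IsFiniteMeasure s.variation := by
  rw [← s.totalVariation_eq_variation]
  infer_instance

theorem abs_integral_le_mul_variation_univ (s : SignedMeasure Ω) {f : Ω → ℝ} {C : ℝ}
    (hb : ∀ ω, |f ω| ≤ C) : |∫ᵛ ω, f ω ∂<•s| ≤ C * s.variation.real Set.univ := by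
  simpa only [ContinuousLinearMap.opNorm_flip, ContinuousLinearMap.opNorm_lsmul, mul_one,
    Real.norm_eq_abs] using
    VectorMeasure.norm_integral_le_of_norm_le_const (μ := s) (f := f)
      (B := (ContinuousLinearMap.lsmul ℝ ℝ).flip) (.of_forall hb)

theorem signedMeasure_integrable_of_continuous_of_bounded [TopologicalSpace Ω]
    [OpensMeasurableSpace Ω] (s : SignedMeasure Ω) {f : Ω → ℝ} {C : ℝ} (hf : Continuous f)
    (hb : ∀ ω, |f ω| ≤ C) : s.Integrable f :=
  .of_bound hf.aestronglyMeasurable C (.of_forall hb)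

end SignedIntegral

section KantorovichRubinstein

variable {Ω : Type*} [MeasurableSpace Ω] [PseudoMetricSpace Ω] [OpensMeasurableSpace Ω]

theorem krDistSigned_le {s t : SignedMeasure Ω} {c : ℝ}
    (h : ∀ f : Ω → ℝ, LipschitzWith 1 f → (∀ ω, |f ω| ≤ 1) →
      ∫ᵛ ω, f ω ∂<•s - ∫ᵛ ω, f ω ∂<•t ≤ c) :
    krDistSigned s t ≤ c := by
  refine csSup_le ⟨_, fun _ => 0, LipschitzWith.const' 0, by simp, rfl⟩ ?_
  rintro _ ⟨f, hf, hb, rfl⟩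
  rw [signedIntegral_sub_eq_integral_sub_integral
    (signedMeasure_integrable_of_continuous_of_bounded s hf.continuous hb)
    (signedMeasure_integrable_of_continuous_of_bounded t hf.continuous hb)]
  exact h f hf hb

theorem integral_sub_integral_le_krDistSigned (s t : SignedMeasure Ω) {f : Ω → ℝ}
    (hf : LipschitzWith 1 f) (hb : ∀ ω, |f ω| ≤ 1) :
    ∫ᵛ ω, f ω ∂<•s - ∫ᵛ ω, f ω ∂<•t ≤ krDistSigned s t := by
  rw [← signedIntegral_sub_eq_integral_sub_integral
    (signedMeasure_integrable_of_continuous_of_bounded s hf.continuous hb)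
    (signedMeasure_integrable_of_continuous_of_bounded t hf.continuous hb)]
  refine le_csSup ⟨1 * (s - t).variation.real Set.univ, ?_⟩ ⟨f, hf, hb, rfl⟩
  rintro _ ⟨g, hg, hgb, rfl⟩
  rw [signedIntegral_eq_integral
    (signedMeasure_integrable_of_continuous_of_bounded _ hg.continuous hgb)]
  exact (le_abs_self _).trans (abs_integral_le_mul_variation_univ _ hgb)

theorem krDistSigned_triangle (s t u : SignedMeasure Ω) :
    krDistSigned s u ≤ krDistSigned s t + krDistSigned t u :=
  krDistSigned_le fun f hf hb => by
    linarith [integral_sub_integral_le_krDistSigned s t hf hb,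
      integral_sub_integral_le_krDistSigned t u hf hb]

theorem abs_apply_univ_sub_apply_univ_le_krDistSigned (s t : SignedMeasure Ω) :
    |s Set.univ - t Set.univ| ≤ krDistSigned s t := by
  have hone := integral_sub_integral_le_krDistSigned s t (LipschitzWith.const' 1) (by simp)
  have hneg := integral_sub_integral_le_krDistSigned s t (LipschitzWith.const' (-1)) (by simp)
  simp only [VectorMeasure.integral_const, ContinuousLinearMap.lsmul_flip_apply,
    ContinuousLinearMap.toSpanSingleton_apply, smul_eq_mul] at hone hneg
  exact abs_le.2 ⟨by linarith, by linarith⟩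

theorem krDistSigned_smul_self_le (c : ℝ) (s : SignedMeasure Ω) :
    krDistSigned (c • s) s ≤ |c - 1| * s.variation.real Set.univ := by
  refine krDistSigned_le fun f _ hb => ?_
  calc ∫ᵛ ω, f ω ∂<•(c • s) - ∫ᵛ ω, f ω ∂<•s = (c - 1) * ∫ᵛ ω, f ω ∂<•s := by
        rw [VectorMeasure.integral_smul_vectorMeasure, smul_eq_mul, sub_one_mul]
    _ ≤ |c - 1| * |∫ᵛ ω, f ω ∂<•s| := (le_abs_self _).trans_eq (abs_mul _ _)
    _ ≤ |c - 1| * s.variation.real Set.univ := by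
        gcongr
        simpa only [one_mul] using abs_integral_le_mul_variation_univ s hb

theorem krDist_smul_lower_bound_general (s : SignedMeasure Ω) (η : Measure Ω) [IsFiniteMeasure η]
    (hmass : s Set.univ = η.real Set.univ) (lam : ℝ) :
    (1 / 2) * krDistSigned s η.toSignedMeasure ≤ krDistSigned s (lam • η.toSignedMeasure) := by
  have htriangle := krDistSigned_triangle s (lam • η.toSignedMeasure) η.toSignedMeasure
  have hscale : krDistSigned (lam • η.toSignedMeasure) η.toSignedMeasure
      ≤ krDistSigned s (lam • η.toSignedMeasure) := calc
    _ ≤ |lam - 1| * η.real Set.univ := by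
      simpa only [Measure.variation_toSignedMeasure] using
        krDistSigned_smul_self_le lam η.toSignedMeasure
    _ = |s Set.univ - (lam • η.toSignedMeasure) Set.univ| := by
      rw [smul_apply, Measure.toSignedMeasure_apply_measurable .univ, hmass, smul_eq_mul,
        ← one_sub_mul, abs_mul, abs_sub_comm, abs_of_nonneg measureReal_nonneg]
    _ ≤ krDistSigned s (lam • η.toSignedMeasure) :=
      abs_apply_univ_sub_apply_univ_le_krDistSigned _ _
  linarith

end KantorovichRubinstein

/-- **Lemma 3**: if `μ` and `η` are Borel probability measures on a compact metric space `Ω`,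
then for any real `λ`, `d(μ, λη) ≥ (1/2) d(μ, η)`. -/
theorem krDist_smul_lower_bound
    {Ω : Type*} [MetricSpace Ω] [CompactSpace Ω] [MeasurableSpace Ω] [BorelSpace Ω]
    (μ η : Measure Ω) [IsProbabilityMeasure μ] [IsProbabilityMeasure η] (lam : ℝ) :
    (1 / 2) * krDistSigned μ.toSignedMeasure η.toSignedMeasure
      ≤ krDistSigned μ.toSignedMeasure (lam • η.toSignedMeasure) :=
  krDist_smul_lower_bound_general _ η (by simp) lam
end
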